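/- arXiv:1303.5317 — 2 statements merged into one kernel-verified Lean document; each statement's English description precedes it below -/
import Mathlib

section
/- Let F : ℝⁿ → ℝⁿ admit a twice continuously differentiable potential V with F = -∇V, and suppose û ∈ ℝⁿ satisfies F(û) = 0. If V is convex on all of ℝⁿ and û is its unique critical point, then for every initial condition u(t₀) ∈ ℝⁿ, u̇(t₀) ∈ ℝⁿ, the solution u(t) of the damped system üᵢ + ηᵢ u̇ᵢ = Fᵢ(u) with ηᵢ > 0 converges asymptotically to û, i.e. u(t) → û as t → ∞. -/
/-!
The proof combines two Lyapunov functions. Write `w = u - û`, `v = u̇`, and let `m > 0` be a lower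
bound of the damping constants. The energy `E = ½|v|² + V(u) - V(û)` satisfies `E' = -∑ ηᵢ vᵢ²`,
and the quantity `P = ∑ (wᵢ vᵢ + ½ ηᵢ wᵢ²)` satisfies `P' = |v|² - ⟨∇V(u), w⟩ ≤ |v|² - (V(u) - V(û))`
by the first-order convexity inequality. Hence `H(t) = P(t) + (2/m + t) E(t)` is nonincreasing on
`[0, ∞)`. Since `P + (2/m) E ≥ (m/4)|w|²`, the bound `H(t) ≤ H(0)` yields at once that `u` stays
bounded for `t ≥ 0` and that `t (V(u(t)) - V(û)) ≤ H(0)`, so `V(u(t)) → V(û)`. Every cluster point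
of `u` at infinity is then a minimizer of `V`, hence a critical point, hence `û`; as `u` stays in a
compact ball, it converges to `û`.
-/

open Filter Topology

/-- A positive lower bound of a finite, possibly empty, family of positive reals. -/
lemma exists_pos_lower_bound {n : ℕ} (η : Fin n → ℝ) (hη : ∀ i, 0 < η i) :
    ∃ m, 0 < m ∧ ∀ i, m ≤ η i := by
  rcases isEmpty_or_nonempty (Fin n) with h | h
  · exact ⟨1, one_pos, fun i => h.elim i⟩
  · obtain ⟨i, hi⟩ := Finite.exists_min η
    exact ⟨η i, hη i, hi⟩

/-- The graph of a differentiable convex function lies above its tangent hyperplanes. -/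
lemma convex_tangent_le {E : Type*} [NormedAddCommGroup E] [InnerProductSpace ℝ E] [CompleteSpace E]
    {V : E → ℝ} (hV : Differentiable ℝ V) (hconv : ConvexOn ℝ Set.univ V) (x y : E) :
    V x + inner ℝ (gradient V x) (y - x) ≤ V y := by
  have hline : ConvexOn ℝ Set.univ (fun s : ℝ => V (AffineMap.lineMap x y s)) :=
    hconv.comp_affineMap (AffineMap.lineMap x y : ℝ →ᵃ[ℝ] E)
  have hd : HasDerivAt (fun s : ℝ => V (AffineMap.lineMap x y s))
      (inner ℝ (gradient V x) (y - x)) 0 := by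
    have h1 : HasFDerivAt V (InnerProductSpace.toDual ℝ E (gradient V x))
        (AffineMap.lineMap x y (0 : ℝ)) := by
      rw [AffineMap.lineMap_apply_zero]
      exact (hV x).hasGradientAt.hasFDerivAt
    have h2 : HasDerivAt (fun s : ℝ => (AffineMap.lineMap x y s : E)) (y - x) 0 :=
      AffineMap.hasDerivAt_lineMap
    exact h1.comp_hasDerivAt (0 : ℝ) h2
  have := hline.le_slope_of_hasDerivAt (Set.mem_univ 0) (Set.mem_univ 1) one_pos hd
  simp only [slope_def_field, AffineMap.lineMap_apply_zero, AffineMap.lineMap_apply_one, sub_zero,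
    div_one] at this
  linarith

/-- A trajectory that stays in a bounded set for `t ≥ 0` and along which `V` tends to its minimum
converges to the minimizer, when the latter is the only critical point. -/
lemma tendsto_of_bounded_of_value {n : ℕ} {V : EuclideanSpace ℝ (Fin n) → ℝ}
    (hV : Continuous V) {uhat : EuclideanSpace ℝ (Fin n)} (hmin : ∀ x, V uhat ≤ V x)
    (huniq : ∀ x, gradient V x = 0 → x = uhat) {u : ℝ → EuclideanSpace ℝ (Fin n)} {R : ℝ}
    (hR : ∀ t, 0 ≤ t → ‖u t - uhat‖ ≤ R) (hVu : Tendsto (fun t => V (u t)) atTop (𝓝 (V uhat))) :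
    Tendsto u atTop (𝓝 uhat) := by
  refine (isCompact_closedBall uhat R).tendsto_nhds_of_unique_mapClusterPt ?_ ?_
  · filter_upwards [eventually_ge_atTop 0] with t ht
    simpa [dist_eq_norm] using hR t ht
  · intro y _ hy
    have hc : MapClusterPt (V y) atTop (V ∘ u) := hy.continuousAt_comp hV.continuousAt
    have hyV : V y = V uhat := by
      have : (𝓝 (V y) ⊓ 𝓝 (V uhat)).NeBot := NeBot.mono hc (inf_le_inf_left _ hVu)
      exact eq_of_nhds_neBot this
    have hloc : IsLocalMin V y := Eventually.of_forall fun z => hyV ▸ hmin z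
    exact huniq y (by simp [gradient, hloc.fderiv_eq_zero])


/-- Global asymptotic convergence of DFPM for a globally convex potential:
if `F = -∇V` with `V` twice continuously differentiable, globally convex, and
`uhat` its unique critical point (with `F uhat = 0`), then every solution of the
damped system `üᵢ + ηᵢ u̇ᵢ = Fᵢ(u)` with `ηᵢ > 0` converges to `uhat`. -/
theorem dfpm_global_convergence {n : ℕ}
    (F : EuclideanSpace ℝ (Fin n) → EuclideanSpace ℝ (Fin n))
    (V : EuclideanSpace ℝ (Fin n) → ℝ) (hV : ContDiff ℝ 2 V)
    (hFV : ∀ x, F x = -gradient V x)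
    (uhat : EuclideanSpace ℝ (Fin n)) (huhat : F uhat = 0)
    (hconv : ConvexOn ℝ Set.univ V)
    (huniq : ∀ x, gradient V x = 0 → x = uhat)
    (η : Fin n → ℝ) (hη : ∀ i, 0 < η i)
    (u u' u'' : ℝ → EuclideanSpace ℝ (Fin n))
    (hu : ∀ t, HasDerivAt u (u' t) t)
    (hu' : ∀ t, HasDerivAt u' (u'' t) t)
    (hode : ∀ t, ∀ i : Fin n, u'' t i + η i * u' t i = F (u t) i) :
    Filter.Tendsto u Filter.atTop (nhds uhat) := by
  have hd : Differentiable ℝ V := hV.differentiable (by norm_num)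
  have htan := convex_tangent_le hd hconv
  have hg0 : gradient V uhat = 0 := by
    have := hFV uhat
    rw [huhat] at this
    simpa using this.symm
  have hmin : ∀ x, V uhat ≤ V x := fun x => by simpa [hg0] using htan uhat x
  obtain ⟨m, hm, hmη⟩ := exists_pos_lower_bound η hη
  have hui : ∀ t i, HasDerivAt (fun s => u s i) (u' t i) t := fun t i =>
    (EuclideanSpace.proj i : _ →L[ℝ] ℝ).hasFDerivAt.comp_hasDerivAt t (hu t)
  have hvi : ∀ t i, HasDerivAt (fun s => u' s i) (u'' t i) t := fun t i =>
    (EuclideanSpace.proj i : _ →L[ℝ] ℝ).hasFDerivAt.comp_hasDerivAt t (hu' t)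
  have hVu : ∀ t, HasDerivAt (fun s => V (u s)) (∑ i, gradient V (u t) i * u' t i) t := fun t => by
    refine ((hd (u t)).hasGradientAt.hasFDerivAt.comp_hasDerivAt t (hu t)).congr_deriv ?_
    simp only [InnerProductSpace.toDual_apply_apply, PiLp.inner_apply, RCLike.inner_apply,
      conj_trivial, mul_comm]
  have hacc : ∀ t i, u'' t i = -gradient V (u t) i - η i * u' t i := fun t i => by
    have := hode t i
    rw [hFV] at this
    simp only [PiLp.neg_apply] at this
    linarith
  set P : ℝ → ℝ := fun t =>
    ∑ i, ((u t i - uhat i) * u' t i + 1 / 2 * η i * (u t i - uhat i) ^ 2) with hP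
  set E : ℝ → ℝ := fun t => ∑ i, 1 / 2 * u' t i ^ 2 + (V (u t) - V uhat) with hE
  have hPd : ∀ t, HasDerivAt P
      (∑ i, (u' t i ^ 2 - gradient V (u t) i * (u t i - uhat i))) t := fun t => by
    refine HasDerivAt.fun_sum fun i _ => ?_
    have hw := (hui t i).sub_const (uhat i)
    refine ((hw.mul (hvi t i)).add ((hw.pow 2).const_mul (1 / 2 * η i))).congr_deriv ?_
    rw [hacc]
    push_cast
    ring
  have hEd : ∀ t, HasDerivAt E (-∑ i, η i * u' t i ^ 2) t := fun t => by
    have hk : HasDerivAt (fun s => ∑ i, 1 / 2 * u' s i ^ 2) (∑ i, u' t i * u'' t i) t := by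
      refine HasDerivAt.fun_sum fun i _ => ?_
      refine (((hvi t i).pow 2).const_mul (1 / 2 : ℝ)).congr_deriv ?_
      push_cast
      ring
    refine (hk.add ((hVu t).sub_const (V uhat))).congr_deriv ?_
    rw [← Finset.sum_add_distrib, ← Finset.sum_neg_distrib]
    refine Finset.sum_congr rfl fun i _ => ?_
    rw [hacc]
    ring
  set H : ℝ → ℝ := fun t => P t + (2 / m + t) * E t with hH
  have hHd : ∀ t, HasDerivAt H (∑ i, (u' t i ^ 2 - gradient V (u t) i * (u t i - uhat i)) +
      (1 * E t + (2 / m + t) * -∑ i, η i * u' t i ^ 2)) t := fun t =>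
    (hPd t).add (((hasDerivAt_id t).const_add (2 / m)).mul (hEd t))
  have hHanti : AntitoneOn H (Set.Ici 0) := by
    refine antitoneOn_of_hasDerivWithinAt_nonpos (convex_Ici 0)
      (fun t _ => (hHd t).continuousAt.continuousWithinAt)
      (fun t _ => (hHd t).hasDerivWithinAt) fun t ht => ?_
    have ht0 : 0 < t := by simpa using ht
    have h1 : V (u t) - V uhat ≤ ∑ i, gradient V (u t) i * (u t i - uhat i) := by
      have := htan (u t) uhat
      rw [← neg_sub (u t) uhat, inner_neg_right] at this
      simp only [PiLp.inner_apply, PiLp.sub_apply, RCLike.inner_apply, conj_trivial,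
        mul_comm _ (gradient V (u t) _)] at this
      linarith
    -- the coefficient `2 / m` makes the damping dominate the kinetic terms of `P'` and `E`
    have h2 : 2 * ∑ i, u' t i ^ 2 ≤ (2 / m + t) * ∑ i, η i * u' t i ^ 2 := by
      rw [Finset.mul_sum, Finset.mul_sum]
      refine Finset.sum_le_sum fun i _ => ?_
      have h3 : 2 ≤ (2 / m + t) * η i := by
        calc (2 : ℝ) = 2 / m * m := by field_simp
          _ ≤ (2 / m + t) * η i := by gcongr <;> linarith [hmη i]
      nlinarith [sq_nonneg (u' t i)]
    have h4 : 0 ≤ ∑ i, u' t i ^ 2 := Finset.sum_nonneg fun i _ => sq_nonneg _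
    simp only [hE, Finset.sum_sub_distrib, ← Finset.mul_sum]
    linarith
  have hEnn : ∀ t, 0 ≤ E t := fun t =>
    add_nonneg (Finset.sum_nonneg fun i _ => by positivity) (sub_nonneg.2 (hmin _))
  have hlow : ∀ t, m / 4 * ‖u t - uhat‖ ^ 2 ≤ P t + 2 / m * E t := fun t => by
    have h1 : m / 4 * ‖u t - uhat‖ ^ 2 ≤ P t + 2 / m * ∑ i, 1 / 2 * u' t i ^ 2 := by
      rw [EuclideanSpace.real_norm_sq_eq, hP, Finset.mul_sum, Finset.mul_sum,
        ← Finset.sum_add_distrib]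
      refine Finset.sum_le_sum fun i _ => ?_
      simp only [PiLp.sub_apply]
      set w := u t i - uhat i
      set v := u' t i
      -- completing the square
      have h2 : w * v + 1 / 2 * m * w ^ 2 + 2 / m * (1 / 2 * v ^ 2) - m / 4 * w ^ 2
          = (m * w / 2 + v) ^ 2 / m := by
        field_simp
        ring
      have h3 : 0 ≤ (m * w / 2 + v) ^ 2 / m := by positivity
      nlinarith [mul_le_mul_of_nonneg_right (hmη i) (sq_nonneg w)]
    have h5 : 0 ≤ 2 / m * (V (u t) - V uhat) :=
      mul_nonneg (by positivity) (sub_nonneg.2 (hmin _))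
    simp only [hE, mul_add] at h1 ⊢
    linarith
  have hHle : ∀ t, 0 ≤ t → P t + 2 / m * E t + t * E t ≤ H 0 := fun t ht => by
    have := hHanti Set.self_mem_Ici ht ht
    simp only [hH] at this ⊢
    linarith
  refine tendsto_of_bounded_of_value hV.continuous hmin huniq
    (R := Real.sqrt (4 / m * H 0)) (fun t ht => ?_) ?_
  · apply Real.le_sqrt_of_sq_le
    have h1 := hlow t
    have h2 := hHle t ht
    have h3 := mul_nonneg ht (hEnn t)
    calc ‖u t - uhat‖ ^ 2 = 4 / m * (m / 4 * ‖u t - uhat‖ ^ 2) := by field_simp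
      _ ≤ 4 / m * H 0 := by gcongr; linarith
  · have hlim : Tendsto (fun t : ℝ => V uhat + H 0 / t) atTop (𝓝 (V uhat)) := by
      simpa using tendsto_const_nhds.add (tendsto_id.const_div_atTop (H 0))
    refine tendsto_of_tendsto_of_tendsto_of_le_of_le' tendsto_const_nhds hlim
      (Eventually.of_forall fun t => hmin _) ?_
    filter_upwards [eventually_gt_atTop 0] with t ht
    have h1 : 0 ≤ m / 4 * ‖u t - uhat‖ ^ 2 := by positivity
    have h2 : E t ≤ H 0 / t := by
      rw [le_div_iff₀ ht]
      linarith [hlow t, hHle t ht.le]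
    have h3 : V (u t) - V uhat ≤ E t :=
      le_add_of_nonneg_left (Finset.sum_nonneg fun i _ => by positivity)
    linarith
end

section
/- Let F : ℝⁿ → ℝⁿ admit a twice continuously differentiable potential V with F = -∇V, and suppose û ∈ ℝⁿ satisfies F(û) = 0. If V is convex on an open neighbourhood Υ of û and û is the unique critical point of V in Υ, then for every initial starting point in a sufficiently small neighbourhood of û (with u̇(t₀) = 0), the solution u(t) of the damped system üᵢ + ηᵢ u̇ᵢ = Fᵢ(u) with ηᵢ > 0 converges asymptotically to û as t → ∞. -/
/-!
The convergence is obtained from two Lyapunov functions along a solution.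

* The energy `E = ½‖u'‖² + V(u) - V(uhat)` satisfies `E' = -∑ ηᵢ u'ᵢ² ≤ 0`. Convexity makes `uhat` a
  minimizer of `V` on `S`, and uniqueness of the critical point makes it strict, so `V - V(uhat)` is
  bounded below by a positive constant on each compact annulus around `uhat` inside `S`
  (`exists_gap_annulus`). Hence a solution that starts at rest close to `uhat` can never cross a
  fixed sphere around `uhat`.
* The function `H = ⟪u', u - uhat⟫ + ½ ∑ ηᵢ (uᵢ - uhatᵢ)²` satisfies
  `H' = ‖u'‖² - ⟪∇V(u), u - uhat⟫ ≤ ‖u'‖² - (V(u) - V(uhat))` by the gradient inequality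
  for convex functions (`ConvexOn.add_inner_gradient_sub_le`).

If `0 < μ ≤ ηᵢ` for all `i`, these combine to `(H + (3 / (2μ)) E)' ≤ -E`, so that
`H + (3 / (2μ)) E + (t - t₀) E` is nonincreasing. As `H` is bounded below on the trapped solution,
`E(t) = O(1 / (t - t₀))`; in particular `V(u(t)) → V(uhat)`, and the annulus bound then forces
`u(t) → uhat`. No invariance principle for the flow is needed.
-/

/-- The gradient inequality: a convex function lies above its tangent hyperplanes. -/
lemma ConvexOn.add_inner_gradient_sub_le {E : Type*} [NormedAddCommGroup E]
    [InnerProductSpace ℝ E] [CompleteSpace E] {S : Set E} {V : E → ℝ} (hconv : ConvexOn ℝ S V)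
    {x y : E} (hx : x ∈ S) (hy : y ∈ S) (hd : DifferentiableAt ℝ V x) :
    V x + inner ℝ (gradient V x) (y - x) ≤ V y := by
  -- restrict `V` to the segment from `x` to `y`
  have hc : ConvexOn ℝ (AffineMap.lineMap x y ⁻¹' S) (V ∘ AffineMap.lineMap (k := ℝ) x y) :=
    hconv.comp_affineMap _
  have hline : HasDerivAt (AffineMap.lineMap (k := ℝ) x y) (y - x) 0 :=
    AffineMap.hasDerivAt_lineMap
  have hd' : HasFDerivAt V (fderiv ℝ V x) (AffineMap.lineMap (k := ℝ) x y 0) := by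
    simpa using hd.hasFDerivAt
  have hder := hd'.comp_hasDerivAt (0 : ℝ) hline
  have := hc.le_slope_of_hasDerivAt (x := 0) (y := 1) (by simpa using hx) (by simpa using hy)
    one_pos hder
  simp only [slope, Function.comp_apply, AffineMap.lineMap_apply_zero,
    AffineMap.lineMap_apply_one] at this
  rw [inner_gradient_left]
  simp at this
  rw [map_sub]
  linarith

/-- A strict minimizer on a closed ball has a positive gap in value on every annulus around it. -/
lemma exists_gap_annulus {E : Type*} [NormedAddCommGroup E] [ProperSpace E] {V : E → ℝ}
    (hV : Continuous V) {p : E} {r ε : ℝ} (hε : 0 < ε)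
    (hmin : ∀ x, ‖x - p‖ ≤ r → x ≠ p → V p < V x) :
    ∃ m, V p < m ∧ ∀ x, ε ≤ ‖x - p‖ → ‖x - p‖ ≤ r → m ≤ V x := by
  have hK : IsCompact {x | ε ≤ ‖x - p‖ ∧ ‖x - p‖ ≤ r} := by
    refine (isCompact_closedBall p r).of_isClosed_subset ?_ fun x hx => ?_
    · have hn : Continuous fun x => ‖x - p‖ := by fun_prop
      exact (isClosed_le continuous_const hn).inter (isClosed_le hn continuous_const)
    · simpa [dist_eq_norm] using hx.2
  rcases Set.eq_empty_or_nonempty {x | ε ≤ ‖x - p‖ ∧ ‖x - p‖ ≤ r} with h0 | h0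
  · refine ⟨V p + 1, by linarith, fun x h1 h2 => ?_⟩
    have : x ∈ {x | ε ≤ ‖x - p‖ ∧ ‖x - p‖ ≤ r} := ⟨h1, h2⟩
    simp [h0] at this
  · obtain ⟨y, hy, hmy⟩ := hK.exists_isMinOn h0 hV.continuousOn
    refine ⟨V y, hmin y hy.2 ?_, fun x h1 h2 => hmy ⟨h1, h2⟩⟩
    rintro rfl
    have := hy.1
    simp at this
    linarith

lemma antitoneOn_Ici_of_hasDerivAt {f f' : ℝ → ℝ} {a : ℝ} (hf : ∀ t, HasDerivAt f (f' t) t)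
    (hf' : ∀ t ≥ a, f' t ≤ 0) : AntitoneOn f (Set.Ici a) :=
  antitoneOn_of_hasDerivWithinAt_nonpos (convex_Ici a)
    (fun t _ => (hf t).continuousAt.continuousWithinAt)
    (fun t _ => (hf t).hasDerivWithinAt) (fun t ht => hf' t (interior_subset ht))


/-- Local asymptotic convergence of DFPM for a locally convex potential:
if `F = -∇V` with `V` twice continuously differentiable, convex on an open
neighbourhood `S` of `uhat`, and `uhat` the unique critical point of `V` in `S`
(with `F uhat = 0`), then every solution of the damped system
`üᵢ + ηᵢ u̇ᵢ = Fᵢ(u)` starting (with zero velocity) sufficiently close to `uhat`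
converges to `uhat`. -/
theorem dfpm_local_convergence {n : ℕ}
    (F : EuclideanSpace ℝ (Fin n) → EuclideanSpace ℝ (Fin n))
    (V : EuclideanSpace ℝ (Fin n) → ℝ) (hV : ContDiff ℝ 2 V)
    (hFV : ∀ x, F x = -gradient V x)
    (uhat : EuclideanSpace ℝ (Fin n)) (huhat : F uhat = 0)
    (S : Set (EuclideanSpace ℝ (Fin n))) (hS : IsOpen S) (huhatS : uhat ∈ S)
    (hconv : ConvexOn ℝ S V)
    (huniq : ∀ x ∈ S, gradient V x = 0 → x = uhat)
    (η : Fin n → ℝ) (hη : ∀ i, 0 < η i) :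
    ∃ δ > 0, ∀ (t₀ : ℝ) (u u' u'' : ℝ → EuclideanSpace ℝ (Fin n)),
      (∀ t, HasDerivAt u (u' t) t) →
      (∀ t, HasDerivAt u' (u'' t) t) →
      (∀ t ≥ t₀, ∀ i : Fin n, u'' t i + η i * u' t i = F (u t) i) →
      ‖u t₀ - uhat‖ < δ → u' t₀ = 0 →
      Filter.Tendsto u Filter.atTop (nhds uhat) := by
  classical
  have hVc : Continuous V := hV.continuous
  have hVd : Differentiable ℝ V := hV.differentiable (by norm_num)
  have hgrad0 : gradient V uhat = 0 := by
    have := hFV uhat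
    rw [huhat] at this
    simpa using this.symm
  have hle : ∀ y ∈ S, V uhat ≤ V y := fun y hy => by
    simpa [hgrad0] using hconv.add_inner_gradient_sub_le huhatS hy (hVd uhat)
  have hlt : ∀ y ∈ S, y ≠ uhat → V uhat < V y := by
    intro y hy hne
    refine lt_of_le_of_ne (hle y hy) fun heq => hne (huniq y hy ?_)
    have hloc : IsLocalMin V y := by
      filter_upwards [hS.mem_nhds hy] with z hz
      rw [← heq]
      exact hle z hz
    simp [gradient, hloc.fderiv_eq_zero]
  obtain ⟨r, hr, hrS⟩ := Metric.nhds_basis_closedBall.mem_iff.1 (hS.mem_nhds huhatS)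
  have hball : ∀ x, ‖x - uhat‖ ≤ r → x ∈ S := fun x hx =>
    hrS (by simpa [dist_eq_norm] using hx)
  have hmin : ∀ x, ‖x - uhat‖ ≤ r → x ≠ uhat → V uhat < V x := fun x hx =>
    hlt x (hball x hx)
  obtain ⟨m, hm, hmV⟩ := exists_gap_annulus hVc hr hmin
  obtain ⟨δ₀, hδ₀, hδV⟩ := Metric.eventually_nhds_iff.1 (hVc.continuousAt.eventually_lt_const hm)
  obtain ⟨μ, hμ, hμη⟩ : ∃ μ > 0, ∀ i, μ ≤ η i := by
    rcases isEmpty_or_nonempty (Fin n) with h | h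
    · exact ⟨1, one_pos, fun i => h.elim i⟩
    · obtain ⟨i, hi⟩ := Finite.exists_min η
      exact ⟨η i, hη i, hi⟩
  refine ⟨min δ₀ r, lt_min hδ₀ hr, ?_⟩
  intro t₀ u u' u'' hu hu' hode hstart hrest
  have hui : ∀ t i, HasDerivAt (fun s => u s i) (u' t i) t := fun t =>
    hasDerivAt_pi.1 ((EuclideanSpace.equiv (Fin n) ℝ).hasFDerivAt.comp_hasDerivAt t (hu t))
  have hui' : ∀ t i, HasDerivAt (fun s => u' s i) (u'' t i) t := fun t =>
    hasDerivAt_pi.1 ((EuclideanSpace.equiv (Fin n) ℝ).hasFDerivAt.comp_hasDerivAt t (hu' t))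
  have hode' : ∀ t ≥ t₀, ∀ i, u'' t i = -gradient V (u t) i - η i * u' t i := by
    intro t ht i
    have := hode t ht i
    rw [hFV] at this
    simp only [PiLp.neg_apply] at this
    linarith
  -- kinetic plus potential energy, normalized to vanish at rest at `uhat`
  let E : ℝ → ℝ := fun t => (1 / 2) * ∑ i, u' t i ^ 2 + (V (u t) - V uhat)
  let E' : ℝ → ℝ := fun t => ∑ i, u' t i * (u'' t i + gradient V (u t) i)
  have hE : ∀ t, HasDerivAt E (E' t) t := by
    intro t
    have h1 : HasDerivAt (fun s => ∑ i, u' s i ^ 2) (∑ i, 2 * u' t i * u'' t i) t :=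
      HasDerivAt.fun_sum fun i _ => by simpa using (hui' t i).fun_pow 2
    have h2 : HasDerivAt (fun s => V (u s)) (∑ i, u' t i * gradient V (u t) i) t := by
      have := (hVd (u t)).hasFDerivAt.comp_hasDerivAt t (hu t)
      rw [← inner_gradient_left, PiLp.inner_apply] at this
      simpa [Function.comp_def] using this
    refine ((h1.const_mul (1 / 2)).add (h2.sub_const (V uhat))).congr_deriv ?_
    rw [Finset.mul_sum, ← Finset.sum_add_distrib]
    exact Finset.sum_congr rfl fun i _ => by ring
  have hE'le : ∀ t ≥ t₀, E' t ≤ -μ * ∑ i, u' t i ^ 2 := by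
    intro t ht
    rw [Finset.mul_sum]
    refine Finset.sum_le_sum fun i _ => ?_
    rw [hode' t ht i]
    nlinarith [mul_le_mul_of_nonneg_right (hμη i) (sq_nonneg (u' t i))]
  have hsq : ∀ t, 0 ≤ ∑ i, u' t i ^ 2 := fun t => Finset.sum_nonneg fun i _ => sq_nonneg _
  have hE'0 : ∀ t ≥ t₀, E' t ≤ 0 := fun t ht =>
    (hE'le t ht).trans (by nlinarith [hsq t])
  have hEanti : AntitoneOn E (Set.Ici t₀) := antitoneOn_Ici_of_hasDerivAt hE hE'0
  have hE0 : E t₀ = V (u t₀) - V uhat := by simp [E, hrest]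
  have hucont : Continuous u := continuous_iff_continuousAt.2 fun t => (hu t).continuousAt
  -- crossing the sphere of radius `r` would cost more energy than is available
  have htrap : ∀ t ≥ t₀, ‖u t - uhat‖ ≤ r := by
    intro t ht
    by_contra! hcon
    have hcont : ContinuousOn (fun s => ‖u s - uhat‖) (Set.Icc t₀ t) := by fun_prop
    obtain ⟨s, hs, hsr⟩ := intermediate_value_Icc ht hcont
      ⟨(hstart.trans_le (min_le_right _ _)).le, hcon.le⟩
    have h1 : E s ≤ E t₀ := hEanti Set.self_mem_Ici hs.1 hs.1
    have h2 : m ≤ V (u s) := hmV _ hsr.ge hsr.le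
    have h3 : V (u t₀) < m := hδV (by
      rw [dist_eq_norm]; exact hstart.trans_le (min_le_left _ _))
    rw [hE0] at h1
    simp only [E] at h1
    linarith [hsq s]
  have hVle : ∀ t ≥ t₀, V (u t) - V uhat ≤ E t := fun t _ => by
    simp only [E]; linarith [hsq t]
  have hVnn : ∀ t ≥ t₀, 0 ≤ V (u t) - V uhat := fun t ht =>
    sub_nonneg.2 (hle _ (hball _ (htrap t ht)))
  have hEnn : ∀ t ≥ t₀, 0 ≤ E t := fun t ht => (hVnn t ht).trans (hVle t ht)
  -- the damping-weighted square makes the terms in `η` cancel in the derivative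
  let H : ℝ → ℝ := fun t =>
    ∑ i, (u' t i * (u t i - uhat i) + (1 / 2) * (η i * (u t i - uhat i) ^ 2))
  let H' : ℝ → ℝ := fun t => ∑ i, (u' t i ^ 2 + (u'' t i + η i * u' t i) * (u t i - uhat i))
  have hH : ∀ t, HasDerivAt H (H' t) t := by
    intro t
    refine HasDerivAt.fun_sum fun i _ => ?_
    have h1 := (hui t i).sub_const (uhat i)
    refine (((hui' t i).mul h1).add (((h1.pow 2).const_mul (η i)).const_mul (1 / 2))).congr_deriv ?_
    simp
    ring
  have hH'le : ∀ t ≥ t₀, H' t ≤ ∑ i, u' t i ^ 2 - (V (u t) - V uhat) := by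
    intro t ht
    have hg := hconv.add_inner_gradient_sub_le (hball _ (htrap t ht)) huhatS (hVd (u t))
    rw [PiLp.inner_apply] at hg
    have : H' t = ∑ i, u' t i ^ 2 + ∑ i, inner ℝ (gradient V (u t) i) ((uhat - u t) i) := by
      rw [← Finset.sum_add_distrib]
      refine Finset.sum_congr rfl fun i _ => ?_
      rw [hode' t ht i]
      simp
      ring
    linarith
  have hHlb : ∀ t ≥ t₀, -(E t₀ + (1 / 2) * r ^ 2) ≤ H t := by
    intro t ht
    have h1 : -((1 / 2) * ∑ i, u' t i ^ 2 + (1 / 2) * ∑ i, (u t i - uhat i) ^ 2) ≤ H t := by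
      rw [Finset.mul_sum, Finset.mul_sum, ← Finset.sum_add_distrib, ← Finset.sum_neg_distrib]
      refine Finset.sum_le_sum fun i _ => ?_
      nlinarith [sq_nonneg (u' t i + (u t i - uhat i)),
        mul_nonneg (hη i).le (sq_nonneg (u t i - uhat i))]
    have h2 : ∑ i, (u t i - uhat i) ^ 2 ≤ r ^ 2 := by
      have := EuclideanSpace.real_norm_sq_eq (u t - uhat)
      simp only [PiLp.sub_apply] at this
      rw [← this]
      exact pow_le_pow_left₀ (norm_nonneg _) (htrap t ht) 2
    have h3 : E t ≤ E t₀ := hEanti Set.self_mem_Ici ht ht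
    have h4 : (1 / 2) * ∑ i, u' t i ^ 2 ≤ E t := by
      simp only [E]; linarith [hVnn t ht]
    linarith
  let Φ : ℝ → ℝ := fun t => H t + 3 / (2 * μ) * E t + (t - t₀) * E t
  have hΦ : ∀ t, HasDerivAt Φ (H' t + 3 / (2 * μ) * E' t + (1 * E t + (t - t₀) * E' t)) t :=
    fun t => ((hH t).add ((hE t).const_mul _)).add
      (((hasDerivAt_id t).sub_const t₀).mul (hE t))
  have hΦanti : AntitoneOn Φ (Set.Ici t₀) := by
    refine antitoneOn_Ici_of_hasDerivAt hΦ fun t ht => ?_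
    have h1 : 3 / (2 * μ) * E' t ≤ -(3 / 2) * ∑ i, u' t i ^ 2 := by
      refine (mul_le_mul_of_nonneg_left (hE'le t ht) (by positivity)).trans_eq ?_
      field_simp
    have h2 : (t - t₀) * E' t ≤ 0 :=
      mul_nonpos_of_nonneg_of_nonpos (sub_nonneg.2 ht) (hE'0 t ht)
    have h3 := hH'le t ht
    have h4 : E t = (1 / 2) * ∑ i, u' t i ^ 2 + (V (u t) - V uhat) := rfl
    linarith
  -- `Φ` is nonincreasing and its first two summands are bounded below
  obtain ⟨C, hC⟩ : ∃ C, ∀ t ≥ t₀, (t - t₀) * E t ≤ C := by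
    refine ⟨Φ t₀ + (E t₀ + (1 / 2) * r ^ 2), fun t ht => ?_⟩
    have h1 : Φ t ≤ Φ t₀ := hΦanti Set.self_mem_Ici ht ht
    have h2 : 0 ≤ 3 / (2 * μ) * E t := mul_nonneg (by positivity) (hEnn t ht)
    have h3 : Φ t = H t + 3 / (2 * μ) * E t + (t - t₀) * E t := rfl
    linarith [hHlb t ht]
  rw [Metric.tendsto_atTop]
  intro ε hε
  obtain ⟨k, hk, hkV⟩ := exists_gap_annulus hVc hε hmin
  refine ⟨t₀ + (|C| + 1) / (k - V uhat), fun t ht => ?_⟩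
  have hkpos : 0 < k - V uhat := sub_pos.2 hk
  have hq : 0 < (|C| + 1) / (k - V uhat) := by positivity
  have ht₀ : t ≥ t₀ := by linarith
  rw [dist_eq_norm]
  by_contra! hcon
  have h1 : k ≤ V (u t) := hkV _ hcon (htrap t ht₀)
  have h2 : |C| + 1 ≤ (t - t₀) * (k - V uhat) := by
    rw [← div_le_iff₀ hkpos]; linarith
  have h3 : (t - t₀) * (k - V uhat) ≤ (t - t₀) * E t :=
    mul_le_mul_of_nonneg_left (by linarith [hVle t ht₀]) (by linarith)
  linarith [hC t ht₀, le_abs_self C]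
end
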